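/- For every integer d ≥ 1, every natural number k, and every real m ∈ [−1, 1], it holds that 0 ≤ |m| − m·g_d^{(k)}(m) ≤ |m|·(1 − |m|)^{(p_d)^k}, where the exponentiation is the real power with exponent (p_d)^k. -/

import Mathlib

noncomputable def g (d : ℕ) : ℝ → ℝ :=
  fun m => ∑ i ∈ Finset.range (d + 1),
    (1 / 4 ^ i : ℝ) * (Nat.choose (2 * i) i) * (m * (1 - m ^ 2) ^ i)

noncomputable def p (d : ℕ) : ℝ :=
  ∑ i ∈ Finset.range (d + 1), (1 / 4 ^ i : ℝ) * (Nat.choose (2 * i) i)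

lemma coef_succ (d : ℕ) : 2 * ((d : ℝ) + 1) * ((1 / 4 ^ (d+1) : ℝ) * (Nat.choose (2 * (d+1)) (d+1)))
    = (2 * d + 1) * ((1 / 4 ^ d : ℝ) * (Nat.choose (2 * d) d)) := by
  have h := Nat.succ_mul_centralBinom_succ d
  simp only [Nat.centralBinom] at h
  have h' : ((d : ℝ) + 1) * (Nat.choose (2 * (d+1)) (d+1)) = 2 * (2 * d + 1) * (Nat.choose (2 * d) d) := by
    exact_mod_cast h
  rw [pow_succ]
  field_simp
  linear_combination 2 * h'

lemma p_succ (d : ℕ) : p (d+1) = p d + (1 / 4 ^ (d+1) : ℝ) * (Nat.choose (2 * (d+1)) (d+1)) := by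
  unfold p; rw [Finset.sum_range_succ]

lemma g_succ (d : ℕ) (x : ℝ) : g (d+1) x = g d x +
    (1 / 4 ^ (d+1) : ℝ) * (Nat.choose (2 * (d+1)) (d+1)) * (x * (1 - x ^ 2) ^ (d+1)) := by
  unfold g; rw [Finset.sum_range_succ]

lemma p_eq (d : ℕ) : p d = (2 * d + 1) * ((1 / 4 ^ d : ℝ) * (Nat.choose (2 * d) d)) := by
  induction d with
  | zero => simp [p]
  | succ d ih =>
    rw [p_succ, ih, ← coef_succ]; push_cast; ring

lemma p_le (d : ℕ) : p d ≤ d + 1 := by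
  unfold p
  calc _ ≤ ∑ i ∈ Finset.range (d + 1), (1 : ℝ) := by
        apply Finset.sum_le_sum
        intro i _
        have h : ((Nat.choose (2 * i) i : ℕ) : ℝ) ≤ 4 ^ i := by
          have := Nat.choose_le_two_pow (2 * i) i
          rw [pow_mul] at this
          norm_num at this
          exact_mod_cast this
        rw [div_mul_eq_mul_div, one_mul, div_le_one (by positivity)]
        exact h
    _ = d + 1 := by simp

lemma one_le_p (d : ℕ) : 1 ≤ p d := by
  induction d with
  | zero => simp [p]
  | succ d ih =>
    rw [p_succ]
    have : 0 ≤ (1 / 4 ^ (d+1) : ℝ) * (Nat.choose (2 * (d+1)) (d+1)) := by positivity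
    linarith

lemma g_deriv (d : ℕ) (x : ℝ) : HasDerivAt (g d) (p d * (1 - x ^ 2) ^ d) x := by
  induction d with
  | zero =>
    have : g 0 = fun x => x := by ext y; simp [g]
    rw [this]; simpa [p] using hasDerivAt_id' x
  | succ d ih =>
    have e : g (d+1) = fun x => g d x +
      (1 / 4 ^ (d+1) : ℝ) * (Nat.choose (2 * (d+1)) (d+1)) * (x * (1 - x ^ 2) ^ (d+1)) := by
      ext y; exact g_succ d y
    rw [e]
    have h1 : HasDerivAt (fun x : ℝ => 1 - x ^ 2) (-(2 * x)) x := by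
      simpa using ((hasDerivAt_id' x).fun_pow 2).const_sub 1
    have h2 := ih.fun_add (((hasDerivAt_id' x).fun_mul (h1.fun_pow (d+1))).const_mul
      ((1 / 4 ^ (d+1) : ℝ) * (Nat.choose (2 * (d+1)) (d+1))))
    refine h2.congr_deriv ?_
    have hp := p_eq d
    rw [← coef_succ] at hp
    rw [p_succ, hp]
    push_cast
    ring

lemma g_zero (d : ℕ) : g d 0 = 0 := by simp [g]

lemma g_one (d : ℕ) : g d 1 = 1 := by
  induction d with
  | zero => simp [g]
  | succ d ih => rw [g_succ, ih]; simp

lemma g_neg (d : ℕ) (x : ℝ) : g d (-x) = - g d x := by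
  simp [g, ← Finset.sum_neg_distrib]

lemma g_iter_neg (d k : ℕ) (x : ℝ) : (g d)^[k] (-x) = - (g d)^[k] x := by
  induction k with
  | zero => simp
  | succ k ih => rw [Function.iterate_succ_apply', Function.iterate_succ_apply', ih, g_neg]

lemma g_mono (d : ℕ) : MonotoneOn (g d) (Set.Icc 0 1) := by
  apply monotoneOn_of_hasDerivWithinAt_nonneg (convex_Icc 0 1)
    (fun x _ => (g_deriv d x).continuousAt.continuousWithinAt)
    (fun x _ => (g_deriv d x).hasDerivWithinAt)
  intro x hx
  rw [interior_Icc] at hx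
  have := one_le_p d
  have : 0 ≤ 1 - x ^ 2 := by nlinarith [hx.1, hx.2]
  positivity

lemma g_mem (d : ℕ) {x : ℝ} (hx : x ∈ Set.Icc (0:ℝ) 1) : g d x ∈ Set.Icc (0:ℝ) 1 := by
  constructor
  · rw [← g_zero d]; exact g_mono d (by simp) hx hx.1
  · rw [← g_one d]; exact g_mono d hx (by simp) hx.2

lemma Q_nonneg (n : ℕ) {x : ℝ} (hx : x ∈ Set.Icc (0:ℝ) 1) :
    0 ≤ (1 - x ^ 2) ^ (n+1) * (1 - x) - (1 - g (n+1) x) := by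
  set Q : ℝ → ℝ := fun x => (1 - x ^ 2) ^ (n+1) * (1 - x) - (1 - g (n+1) x) with hQ
  have hd : ∀ y, HasDerivAt Q ((1 - y ^ 2) ^ n * (1 - y) *
      ((p (n+1) - 1) - (2 * (n + 1) + 1 - p (n+1)) * y)) y := by
    intro y
    have h1 : HasDerivAt (fun x : ℝ => 1 - x ^ 2) (-(2 * y)) y := by
      simpa using ((hasDerivAt_id' y).fun_pow 2).const_sub 1
    have h2 := ((h1.fun_pow (n+1)).fun_mul ((hasDerivAt_id' y).const_sub 1)).fun_sub
      ((g_deriv (n+1) y).const_sub 1)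
    refine h2.congr_deriv ?_
    push_cast
    ring
  have hp1 := one_le_p (n+1)
  have hp2 := p_le (n+1)
  push_cast at hp2
  have hn : (0:ℝ) ≤ n := by positivity
  have key : ∀ y : ℝ, 0 < y → y < 1 → 0 ≤ (1 - y ^ 2) ^ n * (1 - y) := by
    intro y h0 h1
    have : 0 ≤ 1 - y ^ 2 := by nlinarith
    have : 0 ≤ 1 - y := by linarith
    positivity
  change 0 ≤ Q x
  rcases le_total 0 ((p (n+1) - 1) - (2 * (n + 1) + 1 - p (n+1)) * x) with h | h
  · have : MonotoneOn Q (Set.Icc 0 x) := by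
      apply monotoneOn_of_hasDerivWithinAt_nonneg (convex_Icc 0 x)
        (fun x _ => (hd x).continuousAt.continuousWithinAt)
        (fun x _ => (hd x).hasDerivWithinAt)
      intro y hy
      rw [interior_Icc] at hy
      refine mul_nonneg (key y hy.1 (hy.2.trans_le hx.2)) ?_
      nlinarith [hy.1, hy.2]
    have := this (Set.left_mem_Icc.2 hx.1) (Set.right_mem_Icc.2 hx.1) hx.1
    simpa [hQ, g_zero] using this
  · have : AntitoneOn Q (Set.Icc x 1) := by
      apply antitoneOn_of_hasDerivWithinAt_nonpos (convex_Icc x 1)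
        (fun x _ => (hd x).continuousAt.continuousWithinAt)
        (fun x _ => (hd x).hasDerivWithinAt)
      intro y hy
      rw [interior_Icc] at hy
      refine mul_nonpos_of_nonneg_of_nonpos (key y (hx.1.trans_lt hy.1) hy.2) ?_
      nlinarith [hy.1, hy.2]
    have := this (Set.left_mem_Icc.2 hx.2) (Set.right_mem_Icc.2 hx.2) hx.2
    simpa [hQ, g_one] using this

lemma key_bound (n : ℕ) {x : ℝ} (hx : x ∈ Set.Icc (0:ℝ) 1) :
    1 - g (n+1) x ≤ (1 - x) ^ p (n+1) := by
  have hp1 := one_le_p (n+1)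
  rcases eq_or_lt_of_le hx.2 with h | h
  · rw [h, g_one, sub_self, Real.zero_rpow (by linarith)]
  set F : ℝ → ℝ := fun x => (1 - g (n+1) x) * (1 - x) ^ (-p (n+1)) with hF
  have hd : ∀ y, y < 1 → HasDerivAt F (-p (n+1) * (1 - y) ^ (-p (n+1) - 1) *
      ((1 - y ^ 2) ^ (n+1) * (1 - y) - (1 - g (n+1) y))) y := by
    intro y hy
    have h0 : 0 < 1 - y := by linarith
    have h2 := ((g_deriv (n+1) y).const_sub 1).fun_mul
      (((hasDerivAt_id' y).const_sub 1).rpow_const (p := -p (n+1)) (Or.inl h0.ne'))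
    refine h2.congr_deriv ?_
    have : (1 - y) ^ (-p (n+1)) = (1 - y) ^ (-p (n+1) - 1) * (1 - y) := by
      rw [Real.rpow_sub_one h0.ne']; field_simp
    rw [this]
    ring
  have hanti : AntitoneOn F (Set.Icc 0 x) := by
    apply antitoneOn_of_hasDerivWithinAt_nonpos (convex_Icc 0 x)
      (fun y hy => (hd y (hy.2.trans_lt h)).continuousAt.continuousWithinAt)
      (fun y hy => (hd y ((interior_subset hy).2.trans_lt h)).hasDerivWithinAt)
    intro y hy
    have hy' := interior_subset hy
    have hQ := Q_nonneg n (x := y) ⟨hy'.1, hy'.2.trans hx.2⟩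
    have : 0 ≤ (1 - y) ^ (-p (n+1) - 1) := Real.rpow_nonneg (by linarith [hy'.2]) _
    refine mul_nonpos_of_nonpos_of_nonneg ?_ hQ
    nlinarith
  have := hanti (Set.left_mem_Icc.2 hx.1) (Set.right_mem_Icc.2 hx.1) hx.1
  have h0 : 0 < 1 - x := by linarith
  simp only [hF, g_zero, sub_zero, Real.one_rpow, mul_one, Real.rpow_neg h0.le] at this
  rwa [← div_eq_mul_inv, div_le_one (Real.rpow_pos_of_pos h0 _)] at this

lemma iter_bound (n k : ℕ) {x : ℝ} (hx : x ∈ Set.Icc (0:ℝ) 1) :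
    (g (n+1))^[k] x ∈ Set.Icc (0:ℝ) 1 ∧
    1 - (g (n+1))^[k] x ≤ (1 - x) ^ (p (n+1) ^ k) := by
  induction k with
  | zero => simpa using hx
  | succ k ih =>
    rw [Function.iterate_succ_apply']
    refine ⟨g_mem _ ih.1, (key_bound n ih.1).trans ?_⟩
    rw [pow_succ, Real.rpow_mul (by linarith [hx.2])]
    exact Real.rpow_le_rpow (by linarith [ih.1.2]) ih.2 (by linarith [one_le_p (n+1)])

lemma pos_case (n k : ℕ) {x : ℝ} (hx : x ∈ Set.Icc (0:ℝ) 1) :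
    0 ≤ x - x * (g (n+1))^[k] x ∧
    x - x * (g (n+1))^[k] x ≤ x * (1 - x) ^ (p (n+1) ^ k) := by
  obtain ⟨h1, h2⟩ := iter_bound n k hx
  have e : x - x * (g (n+1))^[k] x = x * (1 - (g (n+1))^[k] x) := by ring
  rw [e]
  exact ⟨mul_nonneg hx.1 (by linarith [h1.2]), mul_le_mul_of_nonneg_left h2 hx.1⟩

theorem stmt_11 (d : ℕ) (hd : 1 ≤ d) (k : ℕ) (m : ℝ) (hm : m ∈ Set.Icc (-1 : ℝ) 1) :
    0 ≤ |m| - m * (g d)^[k] m ∧ |m| - m * (g d)^[k] m ≤ |m| * (1 - |m|) ^ (p d ^ k) := by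
  obtain ⟨n, rfl⟩ : ∃ n, d = n + 1 := ⟨d - 1, by omega⟩
  rcases le_total 0 m with h | h
  · rw [abs_of_nonneg h]
    exact pos_case n k ⟨h, hm.2⟩
  · rw [abs_of_nonpos h]
    have := pos_case n k (x := -m) ⟨by linarith, by linarith [hm.1]⟩
    rw [g_iter_neg, neg_mul_neg] at this
    exact this
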